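/- Let g be a pseudo-Riemannian metric on a manifold M of dimension n and let v be a projective vector field for g. Then the (1,1)-tensor L̃ := g^{-1} 𝓛_v g − (1/(n+1))·tr(g^{-1} 𝓛_v g)·Id, where 𝓛_v denotes the Lie derivative along v, satisfies the compatibility equation with g, i.e., ∇_u L̃ = (1/2)(u⊗l̃ + (u⊗l̃)^*) for every tangent vector u, where l̃ = d(tr L̃). -/

import Mathlib

open Matrix Polynomial Filter

noncomputable section

variable {ι : Type} [Fintype ι] [DecidableEq ι]

/-- Partial derivative of a real-valued function on `ι → ℝ` in the direction of the
`j`-th coordinate vector. -/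
def pd (j : ι) (F : (ι → ℝ) → ℝ) (x : ι → ℝ) : ℝ :=
  fderiv ℝ F x (Pi.single j 1)

/-- Christoffel symbols `Γ^i_{jk}` of a metric given in local coordinates as a
matrix-valued function. -/
def christoffel (g : (ι → ℝ) → Matrix ι ι ℝ) (x : ι → ℝ) (i j k : ι) : ℝ :=
  (1 / 2) * ∑ m, (g x)⁻¹ i m *
    (pd j (fun y => g y m k) x + pd k (fun y => g y m j) x - pd m (fun y => g y j k) x)

/-- A curve is a geodesic of `g` up to reparametrisation (an unparametrized geodesic):
`γ̈ + Γ(γ̇,γ̇) = α(t)·γ̇` for some function `α`. -/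
def IsPregeodesic (g : (ι → ℝ) → Matrix ι ι ℝ) (γ : ℝ → ι → ℝ) : Prop :=
  ∃ α : ℝ → ℝ, ∀ t : ℝ, ∀ i : ι,
    deriv (fun s => deriv (fun τ => γ τ i) s) t
      + ∑ j, ∑ k, christoffel g (γ t) i j k *
          deriv (fun τ => γ τ j) t * deriv (fun τ => γ τ k) t
      = α t * deriv (fun τ => γ τ i) t

/-- `g` is a pseudo-Riemannian metric (in local coordinates) on the set `U`. -/
structure IsMetricOn (g : (ι → ℝ) → Matrix ι ι ℝ) (U : Set (ι → ℝ)) : Prop where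
  smooth : ∀ i j, ContDiffOn ℝ (⊤ : ℕ∞) (fun x => g x i j) U
  symm : ∀ x ∈ U, (g x)ᵀ = g x
  nondeg : ∀ x ∈ U, IsUnit (g x).det

/-- Two metrics are geodesically equivalent on `U`: they have the same geodesics
considered as unparametrized curves. -/
def GeodEquiv (g gb : (ι → ℝ) → Matrix ι ι ℝ) (U : Set (ι → ℝ)) : Prop :=
  ∀ γ : ℝ → ι → ℝ, ContDiff ℝ (⊤ : ℕ∞) γ → (∀ t, γ t ∈ U) →
    (IsPregeodesic g γ ↔ IsPregeodesic gb γ)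

/-- The (1,1)-tensor `L(g,ḡ)^i_j = (det ḡ / det g)^{1/(n+1)} ḡ^{ik} g_{kj}`. -/
def Lten (g gb : (ι → ℝ) → Matrix ι ι ℝ) (x : ι → ℝ) : Matrix ι ι ℝ :=
  (((gb x).det / (g x).det) ^ ((1 : ℝ) / (Fintype.card ι + 1))) • ((gb x)⁻¹ * g x)

/-- An admissible factorisation `χ = χ₁·χ₂` of the characteristic polynomial of `L`:
both factors are monic of degree ≥ 1, have smooth coefficients, and have no common
complex root at any point of `U`. -/
structure AdmissibleFact (L : (ι → ℝ) → Matrix ι ι ℝ) (U : Set (ι → ℝ))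
    (chi1 chi2 : (ι → ℝ) → Polynomial ℝ) : Prop where
  factor : ∀ x ∈ U, (L x).charpoly = chi1 x * chi2 x
  monic1 : ∀ x ∈ U, (chi1 x).Monic
  monic2 : ∀ x ∈ U, (chi2 x).Monic
  deg1 : ∀ x ∈ U, 1 ≤ (chi1 x).natDegree
  deg2 : ∀ x ∈ U, 1 ≤ (chi2 x).natDegree
  smooth1 : ∀ k, ContDiffOn ℝ (⊤ : ℕ∞) (fun x => (chi1 x).coeff k) U
  smooth2 : ∀ k, ContDiffOn ℝ (⊤ : ℕ∞) (fun x => (chi2 x).coeff k) U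
  coprime : ∀ x ∈ U, ¬ ∃ z : ℂ, aeval z (chi1 x) = 0 ∧ aeval z (chi2 x) = 0

/-- The distribution `D = ker χ(L)`. -/
def Dker (L : (ι → ℝ) → Matrix ι ι ℝ) (chi : (ι → ℝ) → Polynomial ℝ) (x : ι → ℝ) :
    Submodule ℝ (ι → ℝ) :=
  LinearMap.ker (Matrix.mulVecLin (aeval (L x) (chi x)))

/-- A distribution on `U` is integrable (involutive, which is equivalent by the
Frobenius theorem): the Lie bracket of any two smooth vector fields tangent to the
distribution is again tangent to it. -/
def IsIntegrableDist (U : Set (ι → ℝ)) (D : (ι → ℝ) → Submodule ℝ (ι → ℝ)) : Prop :=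
  ∀ u v : (ι → ℝ) → ι → ℝ, ContDiffOn ℝ (⊤ : ℕ∞) u U → ContDiffOn ℝ (⊤ : ℕ∞) v U →
    (∀ x ∈ U, u x ∈ D x) → (∀ x ∈ U, v x ∈ D x) →
    ∀ x ∈ U, (fderiv ℝ v x (u x) - fderiv ℝ u x (v x)) ∈ D x

/-- The Lie derivative of the Christoffel symbols of `g` along a vector field `v`:
`(𝓛_v Γ)^i_{jk} = v^m ∂_m Γ^i_{jk} − (∂_m v^i) Γ^m_{jk} + (∂_j v^m) Γ^i_{mk}
  + (∂_k v^m) Γ^i_{jm} + ∂_j ∂_k v^i`. -/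
def lieDerivGamma (g : (ι → ℝ) → Matrix ι ι ℝ) (v : (ι → ℝ) → ι → ℝ)
    (x : ι → ℝ) (i j k : ι) : ℝ :=
  (∑ m, v x m * pd m (fun y => christoffel g y i j k) x)
  - (∑ m, pd m (fun y => v y i) x * christoffel g x m j k)
  + (∑ m, pd j (fun y => v y m) x * christoffel g x i m k)
  + (∑ m, pd k (fun y => v y m) x * christoffel g x i j m)
  + pd j (fun y => pd k (fun z => v z i) y) x

/-- `v` is a projective vector field for `g` on `U`: its local flow takes
unparametrized geodesics to geodesics; equivalently, the Lie derivative of the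
Levi-Civita connection of `g` along `v` is of the projective form
`(𝓛_v Γ)^i_{jk} = δ^i_j φ_k + δ^i_k φ_j` for some 1-form `φ`. -/
def IsProjectiveVF (g : (ι → ℝ) → Matrix ι ι ℝ) (v : (ι → ℝ) → ι → ℝ)
    (U : Set (ι → ℝ)) : Prop :=
  ContDiffOn ℝ (⊤ : ℕ∞) v U ∧
  ∃ φ : (ι → ℝ) → ι → ℝ, ∀ x ∈ U, ∀ i j k : ι,
    lieDerivGamma g v x i j k
      = (if i = j then φ x k else 0) + (if i = k then φ x j else 0)

/-- The Lie derivative of the metric `g` (a (0,2)-tensor) along `v`. -/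
def lieDerivMetric (g : (ι → ℝ) → Matrix ι ι ℝ) (v : (ι → ℝ) → ι → ℝ)
    (x : ι → ℝ) : Matrix ι ι ℝ :=
  Matrix.of fun i j =>
    (∑ m, v x m * pd m (fun y => g y i j) x)
    + (∑ m, g x m j * pd i (fun y => v y m) x)
    + (∑ m, g x i m * pd j (fun y => v y m) x)

/-- The covariant derivative `∇_r L^i_j` of a (1,1)-tensor w.r.t. the Levi-Civita
connection of `g`. -/
def covDerivT (g L : (ι → ℝ) → Matrix ι ι ℝ) (x : ι → ℝ) (r i j : ι) : ℝ :=
  pd r (fun y => L y i j) x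
  + (∑ m, christoffel g x i r m * L x m j)
  - (∑ m, christoffel g x m r j * L x i m)

/-- `g` and `L` satisfy the compatibility equation (24):
`∇_r L^i_j = ½ (δ^i_r l_j + g^{is} l_s g_{rj})` with `l = d tr L`;
equivalently `g` and `ḡ = (det L)⁻¹ g L⁻¹` are geodesically equivalent. -/
def Compatible (g L : (ι → ℝ) → Matrix ι ι ℝ) (U : Set (ι → ℝ)) : Prop :=
  ∀ x ∈ U, ∀ r i j : ι,
    covDerivT g L x r i j
      = (1 / 2) * ((if i = r then 1 else 0) * pd j (fun y => (L y).trace) x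
          + (∑ s, (g x)⁻¹ i s * pd s (fun y => (L y).trace) x) * g x r j)

open scoped ContDiff

set_option linter.unusedSectionVars false

section PartialDerivatives

variable {F G : (ι → ℝ) → ℝ} {x : ι → ℝ}

theorem pd_add (j : ι) (hF : DifferentiableAt ℝ F x) (hG : DifferentiableAt ℝ G x) :
    pd j (fun y => F y + G y) x = pd j F x + pd j G x := by
  simp only [pd]
  rw [fderiv_fun_add hF hG]
  rfl

theorem pd_sub (j : ι) (hF : DifferentiableAt ℝ F x) (hG : DifferentiableAt ℝ G x) :
    pd j (fun y => F y - G y) x = pd j F x - pd j G x := by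
  simp only [pd]
  rw [fderiv_fun_sub hF hG]
  rfl

theorem pd_mul (j : ι) (hF : DifferentiableAt ℝ F x) (hG : DifferentiableAt ℝ G x) :
    pd j (fun y => F y * G y) x = pd j F x * G x + F x * pd j G x := by
  simp only [pd]
  rw [fderiv_fun_mul hF hG]
  simp
  ring

theorem pd_const_mul (j : ι) (c : ℝ) (hF : DifferentiableAt ℝ F x) :
    pd j (fun y => c * F y) x = c * pd j F x := by
  simp only [pd]
  rw [fderiv_const_mul hF]
  rfl

theorem pd_sum {κ : Type*} (s : Finset κ) (j : ι) {H : κ → (ι → ℝ) → ℝ}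
    (hH : ∀ k ∈ s, DifferentiableAt ℝ (H k) x) :
    pd j (fun y => ∑ k ∈ s, H k y) x = ∑ k ∈ s, pd j (H k) x := by
  simp only [pd]
  rw [fderiv_fun_sum hH]
  simp

theorem pd_congr (j : ι) (h : F =ᶠ[nhds x] G) : pd j F x = pd j G x := by
  simp only [pd, h.fderiv_eq]

theorem contDiffAt_pd (j : ι) (hF : ContDiffAt ℝ ∞ F x) : ContDiffAt ℝ ∞ (pd j F) x :=
  (hF.fderiv_right (m := ∞) le_rfl).clm_apply contDiffAt_const

theorem pd_comm (j k : ι) (hF : ContDiffAt ℝ ∞ F x) :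
    pd j (pd k F) x = pd k (pd j F) x := by
  have hd : DifferentiableAt ℝ (fderiv ℝ F) x :=
    (hF.fderiv_right (m := ∞) le_rfl).differentiableAt (by simp)
  have key (a b : ι) : pd a (pd b F) x =
      fderiv ℝ (fderiv ℝ F) x (Pi.single a 1) (Pi.single b 1) := by
    change fderiv ℝ (fun y => fderiv ℝ F y (Pi.single b 1)) x (Pi.single a 1) = _
    rw [fderiv_clm_apply hd (differentiableAt_const _)]
    simp
  rw [key, key]
  refine (hF.isSymmSndFDerivAt ?_).eq _ _
  rw [minSmoothness_of_isRCLikeNormedField]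
  exact WithTop.coe_le_coe.2 le_top

end PartialDerivatives

section MatrixFields

/-- A matrix field is smooth at `x` if all its entries are. -/
def SmoothEntries (A : (ι → ℝ) → Matrix ι ι ℝ) (x : ι → ℝ) : Prop :=
  ∀ i j, ContDiffAt ℝ ∞ (fun y => A y i j) x

/-- The entrywise partial derivative of a matrix field. -/
def matrixPd (r : ι) (A : (ι → ℝ) → Matrix ι ι ℝ) (x : ι → ℝ) : Matrix ι ι ℝ :=
  Matrix.of fun i j => pd r (fun y => A y i j) x

variable {A B : (ι → ℝ) → Matrix ι ι ℝ} {x : ι → ℝ}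

theorem SmoothEntries.differentiableAt (hA : SmoothEntries A x) (i j : ι) :
    DifferentiableAt ℝ (fun y => A y i j) x :=
  (hA i j).differentiableAt (by simp)

theorem SmoothEntries.add (hA : SmoothEntries A x) (hB : SmoothEntries B x) :
    SmoothEntries (fun y => A y + B y) x :=
  fun i j => (hA i j).add (hB i j)

theorem SmoothEntries.mul (hA : SmoothEntries A x) (hB : SmoothEntries B x) :
    SmoothEntries (fun y => A y * B y) x := by
  intro i j
  simp only [Matrix.mul_apply]
  exact ContDiffAt.sum fun k _ => (hA i k).mul (hB k j)

theorem SmoothEntries.transpose (hA : SmoothEntries A x) :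
    SmoothEntries (fun y => (A y)ᵀ) x :=
  fun i j => hA j i

theorem SmoothEntries.smul {f : (ι → ℝ) → ℝ} (hf : ContDiffAt ℝ ∞ f x)
    (hA : SmoothEntries A x) : SmoothEntries (fun y => f y • A y) x :=
  fun i j => hf.mul (hA i j)

theorem SmoothEntries.sum {κ : Type*} (s : Finset κ) {H : κ → (ι → ℝ) → Matrix ι ι ℝ}
    (hH : ∀ k ∈ s, SmoothEntries (H k) x) : SmoothEntries (fun y => ∑ k ∈ s, H k y) x := by
  intro i j
  simp only [Matrix.sum_apply]
  exact ContDiffAt.sum fun k hk => hH k hk i j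

theorem SmoothEntries.matrixPd (r : ι) (hA : SmoothEntries A x) :
    SmoothEntries (matrixPd r A) x :=
  fun i j => contDiffAt_pd r (hA i j)

theorem SmoothEntries.det (hA : SmoothEntries A x) :
    ContDiffAt ℝ ∞ (fun y => (A y).det) x := by
  simp only [Matrix.det_apply']
  exact ContDiffAt.sum fun σ _ => contDiffAt_const.mul (contDiffAt_prod fun i _ => hA _ i)

theorem SmoothEntries.inv (hA : SmoothEntries A x) (hdet : IsUnit (A x).det) :
    SmoothEntries (fun y => (A y)⁻¹) x := by
  intro i j
  simp only [Matrix.inv_def, Ring.inverse_eq_inv', Matrix.smul_apply, smul_eq_mul,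
    Matrix.adjugate_apply]
  refine (hA.det.inv hdet.ne_zero).mul (SmoothEntries.det fun a b => ?_)
  by_cases h : a = j
  · subst h
    simpa only [Matrix.updateRow_self] using contDiffAt_const
  · simpa only [Matrix.updateRow_ne h] using hA a b

theorem SmoothEntries.trace (hA : SmoothEntries A x) :
    ContDiffAt ℝ ∞ (fun y => (A y).trace) x :=
  ContDiffAt.sum fun i _ => hA i i

theorem matrixPd_add (r : ι) (hA : SmoothEntries A x) (hB : SmoothEntries B x) :
    matrixPd r (fun y => A y + B y) x = matrixPd r A x + matrixPd r B x := by
  ext i j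
  exact pd_add r (hA.differentiableAt i j) (hB.differentiableAt i j)

theorem matrixPd_mul (r : ι) (hA : SmoothEntries A x) (hB : SmoothEntries B x) :
    matrixPd r (fun y => A y * B y) x = matrixPd r A x * B x + A x * matrixPd r B x := by
  ext i j
  simp only [matrixPd, Matrix.of_apply, Matrix.add_apply, Matrix.mul_apply]
  rw [pd_sum _ _ fun k _ => (hA.differentiableAt i k).fun_mul (hB.differentiableAt k j),
    ← Finset.sum_add_distrib]
  exact Finset.sum_congr rfl fun k _ =>
    pd_mul r (hA.differentiableAt i k) (hB.differentiableAt k j)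

theorem matrixPd_transpose (r : ι) (A : (ι → ℝ) → Matrix ι ι ℝ) (x : ι → ℝ) :
    matrixPd r (fun y => (A y)ᵀ) x = (matrixPd r A x)ᵀ :=
  rfl

theorem matrixPd_smul (r : ι) {f : (ι → ℝ) → ℝ} (hf : ContDiffAt ℝ ∞ f x)
    (hA : SmoothEntries A x) :
    matrixPd r (fun y => f y • A y) x = pd r f x • A x + f x • matrixPd r A x := by
  ext i j
  exact pd_mul r (hf.differentiableAt (by simp)) (hA.differentiableAt i j)

theorem matrixPd_sum {κ : Type*} (s : Finset κ) (r : ι) {H : κ → (ι → ℝ) → Matrix ι ι ℝ}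
    (hH : ∀ k ∈ s, SmoothEntries (H k) x) :
    matrixPd r (fun y => ∑ k ∈ s, H k y) x = ∑ k ∈ s, matrixPd r (H k) x := by
  ext i j
  simp only [matrixPd, Matrix.of_apply, Matrix.sum_apply]
  exact pd_sum s r fun k hk => (hH k hk).differentiableAt i j

theorem matrixPd_congr (r : ι) (h : A =ᶠ[nhds x] B) : matrixPd r A x = matrixPd r B x := by
  ext i j
  exact pd_congr r (h.mono fun y hy => congrFun (congrFun hy i) j)

theorem matrixPd_comm (r s : ι) (hA : SmoothEntries A x) :
    matrixPd r (matrixPd s A) x = matrixPd s (matrixPd r A) x := by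
  ext i j
  exact pd_comm r s (hA i j)

theorem pd_trace (r : ι) (hA : SmoothEntries A x) :
    pd r (fun y => (A y).trace) x = (matrixPd r A x).trace :=
  pd_sum _ r fun i _ => hA.differentiableAt i i

end MatrixFields

section LeviCivita

/-- The connection matrix `(Γ_r)^i_k = Γ^i_{rk}`. -/
def connectionMatrix (g : (ι → ℝ) → Matrix ι ι ℝ) (r : ι) (x : ι → ℝ) : Matrix ι ι ℝ :=
  Matrix.of fun i k => christoffel g x i r k

/-- The Jacobian matrix `∂_k v^i` of a vector field. -/
def jacobianMatrix (v : (ι → ℝ) → ι → ℝ) (x : ι → ℝ) : Matrix ι ι ℝ :=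
  Matrix.of fun i k => pd k (fun y => v y i) x

/-- The matrix `(𝓛_v Γ)^i_{rk}` with fixed lower index `r`. -/
def lieDerivConnectionMatrix (g : (ι → ℝ) → Matrix ι ι ℝ) (v : (ι → ℝ) → ι → ℝ)
    (r : ι) (x : ι → ℝ) : Matrix ι ι ℝ :=
  Matrix.of fun i k => lieDerivGamma g v x i r k

variable {g : (ι → ℝ) → Matrix ι ι ℝ} {v : (ι → ℝ) → ι → ℝ} {U : Set (ι → ℝ)} {x : ι → ℝ}

theorem IsMetricOn.smoothEntries (hg : IsMetricOn g U) (hU : IsOpen U) (hx : x ∈ U) :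
    SmoothEntries g x :=
  fun i j => (hg.smooth i j).contDiffAt (hU.mem_nhds hx)

theorem SmoothEntries.connectionMatrix (hg : SmoothEntries g x) (hdet : IsUnit (g x).det)
    (r : ι) : SmoothEntries (connectionMatrix g r) x := by
  intro i k
  refine contDiffAt_const.mul (ContDiffAt.sum fun m _ => (hg.inv hdet i m).mul ?_)
  exact ((contDiffAt_pd r (hg m k)).add (contDiffAt_pd k (hg m r))).sub
    (contDiffAt_pd m (hg r k))

theorem smoothEntries_jacobianMatrix (hv : ∀ i, ContDiffAt ℝ ∞ (fun y => v y i) x) :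
    SmoothEntries (jacobianMatrix v) x :=
  fun i k => contDiffAt_pd k (hv i)

/-- The lowered Christoffel symbols of the first kind. -/
theorem mul_connectionMatrix_apply (hdet : IsUnit (g x).det) (r i k : ι) :
    (g x * connectionMatrix g r x) i k = (1 / 2) *
      (pd r (fun y => g y i k) x + pd k (fun y => g y i r) x - pd i (fun y => g y r k) x) := by
  have h : connectionMatrix g r x = (1 / 2 : ℝ) • ((g x)⁻¹ * Matrix.of fun m k =>
      pd r (fun y => g y m k) x + pd k (fun y => g y m r) x - pd m (fun y => g y r k) x) := by
    ext a b
    simp only [connectionMatrix, christoffel, Matrix.of_apply, Matrix.smul_apply, smul_eq_mul,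
      Matrix.mul_apply]
  rw [h, Matrix.mul_smul, Matrix.mul_nonsing_inv_cancel_left _ _ hdet]
  rfl

/-- The Levi-Civita connection preserves the metric. -/
theorem matrixPd_metric (hg : IsMetricOn g U) (hU : IsOpen U) (hx : x ∈ U) (r : ι) :
    matrixPd r g x = (connectionMatrix g r x)ᵀ * g x + g x * connectionMatrix g r x := by
  have hsymm (s a b : ι) : pd s (fun y => g y a b) x = pd s (fun y => g y b a) x := by
    refine pd_congr s ?_
    filter_upwards [hU.mem_nhds hx] with y hy
    conv_lhs => rw [← hg.symm y hy]
    rfl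
  have ht : (connectionMatrix g r x)ᵀ * g x = (g x * connectionMatrix g r x)ᵀ := by
    rw [Matrix.transpose_mul, hg.symm x hx]
  ext i j
  rw [ht, Matrix.add_apply, Matrix.transpose_apply, mul_connectionMatrix_apply (hg.nondeg x hx),
    mul_connectionMatrix_apply (hg.nondeg x hx), hsymm r j i, hsymm i j r, hsymm j r i]
  simp only [matrixPd, Matrix.of_apply]
  ring

theorem lieDerivMetric_eq (g : (ι → ℝ) → Matrix ι ι ℝ) (v : (ι → ℝ) → ι → ℝ) (x : ι → ℝ) :
    lieDerivMetric g v x = ∑ m, v x m • matrixPd m g x + (jacobianMatrix v x)ᵀ * g x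
      + g x * jacobianMatrix v x := by
  ext i j
  simp only [lieDerivMetric, matrixPd, jacobianMatrix, Matrix.of_apply, Matrix.add_apply,
    Matrix.sum_apply, Matrix.smul_apply, smul_eq_mul, Matrix.mul_apply, Matrix.transpose_apply,
    mul_comm]

theorem lieDerivConnectionMatrix_eq (g : (ι → ℝ) → Matrix ι ι ℝ) (v : (ι → ℝ) → ι → ℝ)
    (r : ι) (x : ι → ℝ) :
    lieDerivConnectionMatrix g v r x = ∑ m, v x m • matrixPd m (connectionMatrix g r) x
      - jacobianMatrix v x * connectionMatrix g r x
      + ∑ m, jacobianMatrix v x m r • connectionMatrix g m x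
      + connectionMatrix g r x * jacobianMatrix v x + matrixPd r (jacobianMatrix v) x := by
  ext i k
  simp only [lieDerivConnectionMatrix, lieDerivGamma, connectionMatrix, matrixPd, jacobianMatrix,
    Matrix.of_apply, Matrix.add_apply, Matrix.sub_apply, Matrix.sum_apply, Matrix.smul_apply,
    smul_eq_mul, Matrix.mul_apply]
  simp only [mul_comm]

theorem smoothEntries_lieDerivMetric (hg : SmoothEntries g x)
    (hv : ∀ i, ContDiffAt ℝ ∞ (fun y => v y i) x) : SmoothEntries (lieDerivMetric g v) x := by
  have hJ := smoothEntries_jacobianMatrix hv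
  rw [funext (lieDerivMetric_eq g v)]
  exact ((SmoothEntries.sum _ fun m _ => (hg.matrixPd m).smul (hv m)).add
    (hJ.transpose.mul hg)).add (hg.mul hJ)

/-- The covariant derivative of `𝓛_v g` is `𝓛_v Γ` with its upper index lowered and
symmetrised. -/
theorem covDeriv_lieDerivMetric (hg : IsMetricOn g U) (hU : IsOpen U) (hx : x ∈ U)
    (hv : ∀ i, ContDiffAt ℝ ∞ (fun y => v y i) x) (r : ι) :
    matrixPd r (lieDerivMetric g v) x - (connectionMatrix g r x)ᵀ * lieDerivMetric g v x
      - lieDerivMetric g v x * connectionMatrix g r x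
      = (lieDerivConnectionMatrix g v r x)ᵀ * g x + g x * lieDerivConnectionMatrix g v r x := by
  have hs := hg.smoothEntries hU hx
  have hJ := smoothEntries_jacobianMatrix hv
  have hΓ := hs.connectionMatrix (hg.nondeg x hx) r
  have hterm (m : ι) : SmoothEntries (fun y => v y m • matrixPd m g y) x :=
    (hs.matrixPd m).smul (hv m)
  have hsecond (m : ι) : matrixPd r (matrixPd m g) x =
      (matrixPd m (connectionMatrix g r) x)ᵀ * g x
        + (connectionMatrix g r x)ᵀ * matrixPd m g x
        + (matrixPd m g x * connectionMatrix g r x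
        + g x * matrixPd m (connectionMatrix g r) x) := by
    rw [matrixPd_comm r m hs, matrixPd_congr m (show matrixPd r g =ᶠ[nhds x] fun y =>
        (connectionMatrix g r y)ᵀ * g y + g y * connectionMatrix g r y by
      filter_upwards [hU.mem_nhds hx] with y hy using matrixPd_metric hg hU hy r),
      matrixPd_add m (hΓ.transpose.mul hs) (hs.mul hΓ), matrixPd_mul m hΓ.transpose hs,
      matrixPd_mul m hs hΓ, matrixPd_transpose]
  have hleft : ∑ m, jacobianMatrix v x m r • matrixPd m g x =
      (∑ m, jacobianMatrix v x m r • connectionMatrix g m x)ᵀ * g x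
        + g x * ∑ m, jacobianMatrix v x m r • connectionMatrix g m x := by
    simp only [Matrix.transpose_sum, Matrix.transpose_smul, Finset.sum_mul, Finset.mul_sum,
      Matrix.smul_mul, Matrix.mul_smul, ← Finset.sum_add_distrib, ← smul_add]
    exact Finset.sum_congr rfl fun m _ => by rw [matrixPd_metric hg hU hx m]
  have hright : ∑ m, v x m • matrixPd r (matrixPd m g) x =
      (∑ m, v x m • matrixPd m (connectionMatrix g r) x)ᵀ * g x
        + (connectionMatrix g r x)ᵀ * ∑ m, v x m • matrixPd m g x
        + ((∑ m, v x m • matrixPd m g x) * connectionMatrix g r x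
        + g x * ∑ m, v x m • matrixPd m (connectionMatrix g r) x) := by
    simp only [Matrix.transpose_sum, Matrix.transpose_smul, Finset.sum_mul, Finset.mul_sum,
      Matrix.smul_mul, Matrix.mul_smul, ← Finset.sum_add_distrib, ← smul_add]
    exact Finset.sum_congr rfl fun m _ => by rw [hsecond m]
  have hderiv : matrixPd r (lieDerivMetric g v) x =
      ∑ m, jacobianMatrix v x m r • matrixPd m g x
        + ∑ m, v x m • matrixPd r (matrixPd m g) x
        + ((matrixPd r (jacobianMatrix v) x)ᵀ * g x + (jacobianMatrix v x)ᵀ * matrixPd r g x)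
        + (matrixPd r g x * jacobianMatrix v x + g x * matrixPd r (jacobianMatrix v) x) := by
    rw [funext (lieDerivMetric_eq g v),
      matrixPd_add r ((SmoothEntries.sum _ fun m _ => hterm m).add (hJ.transpose.mul hs))
        (hs.mul hJ),
      matrixPd_add r (SmoothEntries.sum _ fun m _ => hterm m) (hJ.transpose.mul hs),
      matrixPd_mul r hJ.transpose hs, matrixPd_mul r hs hJ, matrixPd_transpose,
      matrixPd_sum _ r fun m _ => hterm m, ← Finset.sum_add_distrib]
    congr 3
    exact funext fun m => matrixPd_smul r (hv m) (hs.matrixPd m)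
  rw [hderiv, hleft, hright, matrixPd_metric hg hU hx r, lieDerivMetric_eq,
    lieDerivConnectionMatrix_eq]
  simp only [Matrix.transpose_add, Matrix.transpose_sub, Matrix.transpose_mul]
  noncomm_ring

/-- The covariant derivative of the endomorphism `g⁻¹ 𝓛_v g` in terms of `𝓛_v Γ`. -/
theorem covDeriv_inv_mul_lieDerivMetric (hg : IsMetricOn g U) (hU : IsOpen U) (hx : x ∈ U)
    (hv : ∀ i, ContDiffAt ℝ ∞ (fun y => v y i) x) (r : ι) :
    matrixPd r (fun y => (g y)⁻¹ * lieDerivMetric g v y) x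
        + connectionMatrix g r x * ((g x)⁻¹ * lieDerivMetric g v x)
        - (g x)⁻¹ * lieDerivMetric g v x * connectionMatrix g r x
      = (g x)⁻¹ * (lieDerivConnectionMatrix g v r x)ᵀ * g x
        + lieDerivConnectionMatrix g v r x := by
  have hs := hg.smoothEntries hU hx
  have hdet := hg.nondeg x hx
  have hE := (hs.inv hdet).mul (smoothEntries_lieDerivMetric hs hv)
  have hfactor : lieDerivMetric g v =ᶠ[nhds x]
      fun y => g y * ((g y)⁻¹ * lieDerivMetric g v y) := by
    filter_upwards [hU.mem_nhds hx] with y hy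
    rw [Matrix.mul_nonsing_inv_cancel_left _ _ (hg.nondeg y hy)]
  have hcov := covDeriv_lieDerivMetric hg hU hx hv r
  rw [matrixPd_congr r hfactor, matrixPd_mul r hs hE, matrixPd_metric hg hU hx r,
    hfactor.eq_of_nhds, Matrix.nonsing_inv_mul_cancel_left _ _ hdet] at hcov
  have hcov' := congrArg ((g x)⁻¹ * ·) hcov
  have hinv : (g x)⁻¹ * g x = 1 := Matrix.nonsing_inv_mul _ hdet
  generalize (g x)⁻¹ * lieDerivMetric g v x = E at *
  generalize matrixPd r (fun y => (g y)⁻¹ * lieDerivMetric g v y) x = D at *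
  calc D + connectionMatrix g r x * E - E * connectionMatrix g r x
      = (g x)⁻¹ * g x * (D + connectionMatrix g r x * E - E * connectionMatrix g r x) := by
        rw [hinv, one_mul]
    _ = _ := by
        convert hcov' using 1
        · noncomm_ring
        · simp only [mul_add, ← mul_assoc, hinv, one_mul]

theorem covDerivT_eq (g L : (ι → ℝ) → Matrix ι ι ℝ) (x : ι → ℝ) (r i j : ι) :
    covDerivT g L x r i j = (matrixPd r L x + connectionMatrix g r x * L x
      - L x * connectionMatrix g r x) i j := by
  simp only [covDerivT, matrixPd, connectionMatrix, Matrix.of_apply, Matrix.add_apply,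
    Matrix.sub_apply, Matrix.mul_apply]
  congr 1
  exact Finset.sum_congr rfl fun m _ => mul_comm _ _

end LeviCivita

theorem stmt6 {n : ℕ} (U : Set (Fin n → ℝ)) (hU : IsOpen U)
    (g : (Fin n → ℝ) → Matrix (Fin n) (Fin n) ℝ) (hg : IsMetricOn g U)
    (v : (Fin n → ℝ) → Fin n → ℝ) (hv : IsProjectiveVF g v U)
    -- the tensor `L̃ = g⁻¹ 𝓛_v g − (1/(n+1)) tr(g⁻¹ 𝓛_v g)·Id`
    (Lt : (Fin n → ℝ) → Matrix (Fin n) (Fin n) ℝ)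
    (hLt : ∀ x, Lt x = (g x)⁻¹ * lieDerivMetric g v x
      - (((1 : ℝ) / (n + 1)) * ((g x)⁻¹ * lieDerivMetric g v x).trace) • 1) :
    -- then `L̃` is compatible with `g`
    Compatible g Lt U := by
  obtain ⟨hvs, φ, hφ⟩ := hv
  intro x hx r i j
  have hv (i : Fin n) : ContDiffAt ℝ ∞ (fun y => v y i) x :=
    contDiffAt_pi.1 (hvs.contDiffAt (hU.mem_nhds hx)) i
  have hs := hg.smoothEntries hU hx
  have hdet := hg.nondeg x hx
  have hinv : (g x)⁻¹ * g x = 1 := Matrix.nonsing_inv_mul _ hdet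
  set E : (Fin n → ℝ) → Matrix (Fin n) (Fin n) ℝ :=
    fun y => (g y)⁻¹ * lieDerivMetric g v y
  have hE : SmoothEntries E x := (hs.inv hdet).mul (smoothEntries_lieDerivMetric hs hv)
  have hn : (n : ℝ) + 1 ≠ 0 := by positivity
  have hA (s : Fin n) : lieDerivConnectionMatrix g v s x =
      Matrix.vecMulVec (Pi.single s 1) (φ x) + φ x s • 1 := by
    ext a b
    simp only [lieDerivConnectionMatrix, Matrix.of_apply, hφ x hx, Matrix.add_apply,
      Matrix.vecMulVec_apply, Matrix.smul_apply, Matrix.one_apply, Pi.single_apply]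
    simp
  have hcov (s : Fin n) : matrixPd s E x + connectionMatrix g s x * E x
      - E x * connectionMatrix g s x
      = Matrix.vecMulVec ((g x)⁻¹ *ᵥ φ x) (g x s)
        + Matrix.vecMulVec (Pi.single s 1) (φ x) + (2 * φ x s) • 1 := by
    have h := covDeriv_inv_mul_lieDerivMetric hg hU hx hv s
    rw [hA s, Matrix.transpose_add, Matrix.transpose_smul, Matrix.transpose_one,
      Matrix.transpose_vecMulVec, mul_add, add_mul, Matrix.mul_vecMulVec,
      Matrix.vecMulVec_mul, Matrix.single_one_vecMul, Matrix.mul_smul, mul_one,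
      Matrix.smul_mul, hinv] at h
    rw [h, two_mul, add_smul]
    simp only [Matrix.row]
    abel
  have htrace (s : Fin n) : pd s (fun y => (E y).trace) x = 2 * (n + 1) * φ x s := by
    have h := congrArg Matrix.trace (hcov s)
    have hdot : ((g x)⁻¹ *ᵥ φ x) ⬝ᵥ g x s = φ x s := by
      have : g x *ᵥ ((g x)⁻¹ *ᵥ φ x) = φ x := by
        rw [Matrix.mulVec_mulVec, Matrix.mul_nonsing_inv _ hdet, Matrix.one_mulVec]
      rw [dotProduct_comm]
      exact congrFun this s
    rw [Matrix.trace_sub, Matrix.trace_add, Matrix.trace_mul_comm (E x), add_sub_cancel_right,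
      Matrix.trace_add, Matrix.trace_add, Matrix.trace_vecMulVec, Matrix.trace_vecMulVec, hdot,
      single_one_dotProduct, Matrix.trace_smul, Matrix.trace_one, Fintype.card_fin,
      smul_eq_mul] at h
    rw [pd_trace s hE, h]
    ring
  have hLtrace (s : Fin n) : pd s (fun y => (Lt y).trace) x = 2 * φ x s := by
    have : (fun y => (Lt y).trace) = fun y => (1 / ((n : ℝ) + 1)) * (E y).trace := by
      funext y
      rw [hLt y, Matrix.trace_sub, Matrix.trace_smul, Matrix.trace_one, Fintype.card_fin,
        smul_eq_mul]
      field_simp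
      ring
    rw [this, pd_const_mul s _ (hE.trace.differentiableAt (by simp)), htrace s]
    field_simp
  have hLpd : matrixPd r Lt x = matrixPd r E x - (2 * φ x r) • 1 := by
    ext a b
    have hentry : (fun y => Lt y a b) = fun y =>
        E y a b - ((1 / ((n : ℝ) + 1)) * (1 : Matrix (Fin n) (Fin n) ℝ) a b) * (E y).trace := by
      funext y
      rw [hLt y, Matrix.sub_apply, Matrix.smul_apply, smul_eq_mul]
      ring
    have htr := hE.trace.differentiableAt (by simp)
    simp only [matrixPd, Matrix.of_apply, Matrix.sub_apply, Matrix.smul_apply, smul_eq_mul]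
    rw [hentry, pd_sub r (hE.differentiableAt a b) (htr.const_mul _), pd_const_mul r _ htr,
      htrace r]
    field_simp
  have hLcov : matrixPd r Lt x + connectionMatrix g r x * Lt x - Lt x * connectionMatrix g r x
      = Matrix.vecMulVec ((g x)⁻¹ *ᵥ φ x) (g x r)
        + Matrix.vecMulVec (Pi.single r 1) (φ x) := by
    have h := hcov r
    rw [hLpd, hLt x, mul_sub, sub_mul, Matrix.mul_smul, Matrix.smul_mul, mul_one, one_mul]
    rw [← sub_eq_iff_eq_add] at h
    rw [← h]
    abel
  rw [covDerivT_eq, hLcov]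
  simp only [hLtrace, Matrix.add_apply, Matrix.vecMulVec_apply, Pi.single_apply, Matrix.mulVec,
    dotProduct]
  have hsum : ∑ s, (g x)⁻¹ i s * (2 * φ x s) = 2 * ∑ s, (g x)⁻¹ i s * φ x s := by
    rw [Finset.mul_sum]
    exact Finset.sum_congr rfl fun s _ => by ring
  rw [hsum]
  ring
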